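/- For any relatively prime positive integers n₁ and n₂, the languages Lᵢ = (b^{nᵢ})* (i = 1, 2) over the unary alphabet {b} satisfy tc(Lᵢ) = nᵢ and tc(L₁ ∩ L₂) = n₁·n₂. -/

import Mathlib

/-- An incomplete DFA over alphabet `α` with state type `σ`:
the transition function is a partial function, modelled as `Option`-valued. -/
structure IDFA (α : Type) (σ : Type) where
  /-- The (partial) transition function. -/
  step : σ → α → Option σ
  /-- The start state. -/
  start : σ
  /-- The set of accepting states. -/
  accept : Set σ

namespace IDFA

variable {α σ : Type}

/-- The extended (partial) transition function on words. -/
def evalFrom (A : IDFA α σ) (q : σ) (w : List α) : Option σ :=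
  w.foldl (fun oq a => oq.bind fun p => A.step p a) (some q)

/-- Running the automaton from the start state. -/
def eval (A : IDFA α σ) (w : List α) : Option σ :=
  A.evalFrom A.start w

/-- The language recognized by an incomplete DFA: words on which the run is
defined and ends in an accepting state. -/
def accepts (A : IDFA α σ) : Set (List α) :=
  {w | ∃ q ∈ A.accept, A.eval w = some q}

/-- `#tr(A)`: the number of (defined) transitions of `A`. -/
noncomputable def trCount (A : IDFA α σ) : ℕ :=
  {p : σ × α | (A.step p.1 p.2).isSome}.ncard

/-- `#tr(A, b)`: the number of `b`-transitions of `A`. -/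
noncomputable def trCountOn (A : IDFA α σ) (b : α) : ℕ :=
  {q : σ | (A.step q b).isSome}.ncard

/-- An incomplete DFA is connected if every state is reachable from the start state. -/
def Connected (A : IDFA α σ) : Prop :=
  ∀ q : σ, ∃ w : List α, A.evalFrom A.start w = some q

end IDFA

/-- A language is regular iff it is recognized by some incomplete DFA with
finitely many states. -/
def IsRegularLang {α : Type} (L : Set (List α)) : Prop :=
  ∃ (σ : Type) (_ : Finite σ) (A : IDFA α σ), A.accepts = L

/-- `tc(L)`: the transition complexity of `L`, i.e. the minimal number of
transitions of any incomplete DFA recognizing `L`. -/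
noncomputable def tc {α : Type} (L : Set (List α)) : ℕ :=
  sInf {n | ∃ (σ : Type) (_ : Finite σ) (A : IDFA α σ), A.accepts = L ∧ A.trCount = n}

/-- `tc_b(L)`: the `b`-transition complexity of `L`, i.e. the minimal number of
`b`-transitions of any incomplete DFA recognizing `L`. -/
noncomputable def tcOn {α : Type} (L : Set (List α)) (b : α) : ℕ :=
  sInf {n | ∃ (σ : Type) (_ : Finite σ) (A : IDFA α σ), A.accepts = L ∧ A.trCountOn b = n}

/-- `sc(L)`: the (incomplete-DFA) state complexity of `L`, i.e. the number of
states of a minimal incomplete DFA recognizing `L`. -/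
noncomputable def sc {α : Type} (L : Set (List α)) : ℕ :=
  sInf {n | ∃ (σ : Type) (_ : Finite σ) (A : IDFA α σ), A.accepts = L ∧ Nat.card σ = n}

/-!
Reading a word `u` takes a deterministic automaton through `|u|` states, one before each letter. If
two of them coincide, say after the prefixes of length `i` and `j`, then the prefix of length `j`
may be completed by the suffix of `u` starting at `i`, so a word of length `|u| + j - i` is accepted
together with `u`. When all accepted words have length divisible by `|u|` this forces `i = j`, and
the automaton has at least `|u|` transitions. Hence a single cycle labelled by `u` is optimal for
`u*`, i.e. `tc (u*) = |u|`. Since `(u ^ m)* ∩ (u ^ n)* = (u ^ lcm m n)*`, the same computation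
covers intersections.
-/

namespace IDFA

variable {α σ : Type}

theorem evalFrom_append (A : IDFA α σ) (q : σ) (v w : List α) :
    A.evalFrom q (v ++ w) = (A.evalFrom q v).bind fun p => A.evalFrom p w := by
  have foldl_none : w.foldl (fun oq a => oq.bind fun p => A.step p a) none = none := by
    induction w with
    | nil => rfl
    | cons _ _ ih => exact ih
  simp only [evalFrom, List.foldl_append]
  cases v.foldl (fun oq a => oq.bind fun p => A.step p a) (some q) with
  | none => exact foldl_none
  | some p => rfl

theorem eval_append (A : IDFA α σ) (v w : List α) :
    A.eval (v ++ w) = (A.eval v).bind fun p => A.evalFrom p w :=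
  A.evalFrom_append A.start v w

theorem eval_append_singleton (A : IDFA α σ) (w : List α) (a : α) :
    A.eval (w ++ [a]) = (A.eval w).bind fun p => A.step p a :=
  A.eval_append w [a]

theorem append_mem_accepts_congr {A : IDFA α σ} {v v' : List α} (h : A.eval v = A.eval v')
    (w : List α) : v ++ w ∈ A.accepts ↔ v' ++ w ∈ A.accepts := by
  simp only [accepts, Set.mem_ofPred_eq, eval_append, h]

theorem exists_eval_take_eq_some {A : IDFA α σ} {u : List α} (hu : u ∈ A.accepts)
    (i : Fin u.length) : ∃ q, A.eval (u.take i) = some q ∧ (A.step q u[i]).isSome := by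
  obtain ⟨r, -, hr⟩ := hu
  have hsplit : u = (u.take i ++ [u[i]]) ++ u.drop (i + 1) := by simp
  rw [hsplit, eval_append] at hr
  obtain ⟨p, hp, -⟩ := Option.bind_eq_some_iff.1 hr
  rw [eval_append_singleton] at hp
  obtain ⟨q, hq, hstep⟩ := Option.bind_eq_some_iff.1 hp
  exact ⟨q, hq, Option.isSome_of_eq_some hstep⟩

theorem eq_of_eval_take_eq {A : IDFA α σ} {u : List α} (hu : u ∈ A.accepts)
    (hdvd : ∀ w ∈ A.accepts, u.length ∣ w.length) {i j : Fin u.length}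
    (h : A.eval (u.take i) = A.eval (u.take j)) : i = j := by
  have hmem : u.take j ++ u.drop i ∈ A.accepts := by
    rwa [← append_mem_accepts_congr h, List.take_append_drop]
  have hlength : u.length ∣ j + (u.length - i) := by
    simpa [j.is_lt.le] using hdvd _ hmem
  have heq : j + (u.length - i) = u.length :=
    Nat.eq_of_dvd_of_lt_two_mul (by omega) hlength (by omega)
  omega

theorem length_le_trCount [Finite α] [Finite σ] {A : IDFA α σ} {u : List α} (hu : u ∈ A.accepts)
    (hdvd : ∀ w ∈ A.accepts, u.length ∣ w.length) : u.length ≤ A.trCount := by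
  choose q hq hstep using exists_eval_take_eq_some hu
  have hinj : Function.Injective fun i : Fin u.length => (q i, u[i]) := fun i j hij => by
    have hqij : q i = q j := congrArg Prod.fst hij
    exact eq_of_eval_take_eq hu hdvd (by rw [hq, hq, hqij])
  calc u.length = (Set.range fun i : Fin u.length => (q i, u[i])).ncard := by
        rw [← Nat.card_coe_set_eq, Nat.card_range_of_injective hinj, Nat.card_fin]
    _ ≤ A.trCount := Set.ncard_le_ncard (Set.range_subset_iff.2 hstep) (Set.toFinite _)

theorem tc_accepts_eq_trCount [Finite σ] (A : IDFA α σ)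
    (hmin : ∀ (τ : Type) [Finite τ] (B : IDFA α τ), B.accepts = A.accepts →
      A.trCount ≤ B.trCount) : tc A.accepts = A.trCount := by
  refine IsLeast.csInf_eq ⟨⟨σ, ‹_›, A, rfl, rfl⟩, ?_⟩
  rintro _ ⟨τ, _, B, hB, rfl⟩
  exact hmin τ B hB

end IDFA

section WordPow

variable {α : Type}

/-- The power `u ^ k` of a word `u`, i.e. the concatenation of `k` copies of `u`. -/
def wordPow (u : List α) (k : ℕ) : List α :=
  (List.replicate k u).flatten

/-- The language `u*` of all powers of a word `u`; thus `(u ^ n)*` is `wordStar (wordPow u n)`. -/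
def wordStar (u : List α) : Set (List α) :=
  Set.range (wordPow u)

theorem wordPow_succ (u : List α) (k : ℕ) : wordPow u (k + 1) = wordPow u k ++ u := by
  simp [wordPow, List.replicate_succ']

theorem length_wordPow (u : List α) (k : ℕ) : (wordPow u k).length = k * u.length := by
  simp [wordPow]

theorem wordPow_add (u : List α) (k l : ℕ) : wordPow u (k + l) = wordPow u k ++ wordPow u l := by
  rw [wordPow, List.replicate_add, List.flatten_append, wordPow, wordPow]

theorem wordPow_wordPow (u : List α) (n k : ℕ) : wordPow (wordPow u n) k = wordPow u (k * n) := by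
  induction k with
  | zero => simp [wordPow]
  | succ k ih => rw [wordPow_succ, ih, Nat.succ_mul, wordPow_add]

theorem wordPow_injective {u : List α} (hu : u ≠ []) : Function.Injective (wordPow u) :=
  fun k l h => Nat.eq_of_mul_eq_mul_right (List.length_pos_iff.2 hu) <| by
    rw [← length_wordPow, ← length_wordPow, h]

theorem self_mem_wordStar (u : List α) : u ∈ wordStar u :=
  ⟨1, by simp [wordPow]⟩

theorem length_dvd_of_mem_wordStar {u w : List α} (hw : w ∈ wordStar u) :
    u.length ∣ w.length := by
  obtain ⟨k, rfl⟩ := hw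
  exact ⟨k, by rw [length_wordPow, mul_comm]⟩

theorem wordPow_mem_wordStar_wordPow {u : List α} (hu : u ≠ []) {n k : ℕ} :
    wordPow u k ∈ wordStar (wordPow u n) ↔ n ∣ k := by
  simp only [wordStar, Set.mem_range, wordPow_wordPow, (wordPow_injective hu).eq_iff,
    dvd_iff_exists_eq_mul_left, eq_comm]

theorem wordStar_wordPow_subset (u : List α) (n : ℕ) : wordStar (wordPow u n) ⊆ wordStar u := by
  rintro _ ⟨k, rfl⟩
  exact ⟨k * n, (wordPow_wordPow u n k).symm⟩

theorem wordStar_wordPow_inter (u : List α) (m n : ℕ) :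
    wordStar (wordPow u m) ∩ wordStar (wordPow u n) = wordStar (wordPow u (m.lcm n)) := by
  rcases eq_or_ne u [] with rfl | hu
  · simp [wordPow]
  have hsub := wordStar_wordPow_subset u
  ext w
  by_cases hw : w ∈ wordStar u
  · obtain ⟨k, rfl⟩ := hw
    simp only [Set.mem_inter_iff, wordPow_mem_wordStar_wordPow hu, Nat.lcm_dvd_iff]
  · exact iff_of_false (fun h => hw (hsub m h.1)) fun h => hw (hsub _ h)

theorem wordStar_wordPow_singleton (b : α) (n : ℕ) :
    wordStar (wordPow [b] n) = {w | ∃ k, w = List.replicate (k * n) b} := by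
  ext w
  simp only [wordStar, Set.mem_range, wordPow_wordPow, Set.mem_ofPred_eq, eq_comm (b := w)]
  simp only [wordPow, List.flatten_replicate_singleton]

end WordPow

namespace IDFA

variable {α : Type}

open Classical in
/-- The automaton for `u*` consisting of one cycle labelled by `u`: in state `i` it expects the
letter `u[i]`, and after the last letter it returns to state `0`. State `u.length`
has no transitions; it provides the start state when `u` is empty. -/
noncomputable def cycle (u : List α) : IDFA α (Fin (u.length + 1)) where
  step i a :=
    if u[(i : ℕ)]? = some a then some (Fin.ofNat (u.length + 1) ((i + 1) % u.length)) else none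
  start := 0
  accept := {0}

variable {u : List α}

theorem cycle_step_eq_some_iff {i j : Fin (u.length + 1)} {a : α} :
    (cycle u).step i a = some j ↔ u[(i : ℕ)]? = some a ∧ (j : ℕ) = (i + 1) % u.length := by
  simp only [cycle, Option.ite_none_right_eq_some, Option.some.injEq, Fin.ext_iff, Fin.val_ofNat]
  refine and_congr_right fun hi => ?_
  have hlt : (i + 1) % u.length < u.length + 1 :=
    (Nat.mod_lt _ (List.getElem?_eq_some_iff.1 hi).1.pos).trans (Nat.lt_succ_self _)
  rw [Nat.mod_eq_of_lt hlt, eq_comm]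

theorem mem_accepts_cycle_iff {w : List α} :
    w ∈ (cycle u).accepts ↔ (cycle u).eval w = some 0 := by
  simp [accepts, cycle]

theorem exists_eq_wordPow_append_take_of_eval_cycle {w : List α} {j : Fin (u.length + 1)}
    (h : (cycle u).eval w = some j) : ∃ k, w = wordPow u k ++ u.take j := by
  induction w using List.reverseRecOn generalizing j with
  | nil =>
    obtain rfl : 0 = j := Option.some.inj h
    exact ⟨0, by simp [wordPow]⟩
  | append_singleton w a ih =>
    rw [eval_append_singleton] at h
    obtain ⟨i, hi, hstep⟩ := Option.bind_eq_some_iff.1 h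
    obtain ⟨k, rfl⟩ := ih hi
    obtain ⟨hletter, hj⟩ := cycle_step_eq_some_iff.1 hstep
    obtain ⟨hlt, rfl⟩ := List.getElem?_eq_some_iff.1 hletter
    rw [List.append_assoc, List.take_append_getElem hlt, hj]
    rcases (Nat.succ_le_of_lt hlt).eq_or_lt with hlast | hinner
    · exact ⟨k + 1, by simp [wordPow_succ, show (i : ℕ) + 1 = u.length from hlast]⟩
    · exact ⟨k, by rw [Nat.mod_eq_of_lt hinner]⟩

theorem exists_eval_cycle_append_take {w : List α} (hw : (cycle u).eval w = some 0) {i : ℕ}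
    (hi : i ≤ u.length) :
    ∃ j, (cycle u).eval (w ++ u.take i) = some j ∧ (j : ℕ) = i % u.length := by
  induction i with
  | zero => exact ⟨0, by simpa using hw, by simp⟩
  | succ i ih =>
    obtain ⟨j, hj, hji⟩ := ih (Nat.le_of_succ_le hi)
    rw [Nat.mod_eq_of_lt hi] at hji
    have hlt : (i + 1) % u.length < u.length + 1 :=
      (Nat.mod_lt _ (by omega)).trans (Nat.lt_succ_self _)
    refine ⟨⟨_, hlt⟩, ?_, rfl⟩
    rw [← List.take_append_getElem hi, ← List.append_assoc, eval_append_singleton, hj]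
    exact cycle_step_eq_some_iff.2 ⟨by simp [hji], by simp [hji]⟩

theorem eval_cycle_wordPow (u : List α) (k : ℕ) : (cycle u).eval (wordPow u k) = some 0 := by
  induction k with
  | zero => rfl
  | succ k ih =>
    obtain ⟨j, hj, hj0⟩ := exists_eval_cycle_append_take ih le_rfl
    obtain rfl : j = 0 := Fin.ext (hj0.trans (Nat.mod_self _))
    rwa [List.take_length, ← wordPow_succ] at hj

theorem accepts_cycle (u : List α) : (cycle u).accepts = wordStar u := by
  ext w
  rw [mem_accepts_cycle_iff]
  constructor
  · intro hw
    obtain ⟨k, rfl⟩ := exists_eq_wordPow_append_take_of_eval_cycle hw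
    exact ⟨k, by simp⟩
  · rintro ⟨k, rfl⟩
    exact eval_cycle_wordPow u k

theorem trCount_cycle (u : List α) : (cycle u).trCount = u.length := by
  have hinj : Function.Injective fun i : Fin u.length => (i.castSucc, u[i]) :=
    fun i j hij => Fin.castSucc_injective _ (congrArg Prod.fst hij)
  have htransitions : {p : Fin (u.length + 1) × α | ((cycle u).step p.1 p.2).isSome} =
      Set.range fun i : Fin u.length => (i.castSucc, u[i]) := by
    ext ⟨i, a⟩
    simp only [cycle, Set.mem_ofPred_eq, Option.isSome_ite, List.getElem?_eq_some_iff,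
      Set.mem_range, Prod.mk.injEq]
    constructor
    · rintro ⟨hi, ha⟩
      exact ⟨⟨i, hi⟩, rfl, ha⟩
    · rintro ⟨i, rfl, rfl⟩
      exact ⟨i.is_lt, rfl⟩
  rw [trCount, htransitions, ← Nat.card_coe_set_eq, Nat.card_range_of_injective hinj, Nat.card_fin]

end IDFA

theorem tc_wordStar {α : Type} [Finite α] (u : List α) : tc (wordStar u) = u.length := by
  rw [← IDFA.accepts_cycle]
  refine (IDFA.tc_accepts_eq_trCount _ fun τ _ B hB => ?_).trans (IDFA.trCount_cycle u)
  rw [IDFA.accepts_cycle] at hB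
  rw [IDFA.trCount_cycle]
  exact IDFA.length_le_trCount (hB ▸ self_mem_wordStar u)
    fun w hw => length_dvd_of_mem_wordStar (hB ▸ hw)

theorem tc_inter_unary_witness_general {α : Type} [Finite α] (u : List α) (n₁ n₂ : ℕ) :
    tc (wordStar (wordPow u n₁)) = n₁ * u.length ∧
    tc (wordStar (wordPow u n₂)) = n₂ * u.length ∧
    tc (wordStar (wordPow u n₁) ∩ wordStar (wordPow u n₂)) = n₁.lcm n₂ * u.length := by
  simp only [wordStar_wordPow_inter, tc_wordStar, length_wordPow, and_self]

/-- for relatively prime positive `n₁, n₂`, the unary languages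
`Lᵢ = (b^{nᵢ})* = {b^{k·nᵢ} : k ≥ 0}` satisfy `tc(Lᵢ) = nᵢ` and
`tc(L₁ ∩ L₂) = n₁·n₂`. -/
theorem tc_inter_unary_witness
    (n₁ n₂ : ℕ) (hn₁ : 1 ≤ n₁) (hn₂ : 1 ≤ n₂) (hcop : Nat.Coprime n₁ n₂) :
    tc {w : List Unit | ∃ k : ℕ, w = List.replicate (k * n₁) ()} = n₁ ∧
    tc {w : List Unit | ∃ k : ℕ, w = List.replicate (k * n₂) ()} = n₂ ∧
    tc ({w : List Unit | ∃ k : ℕ, w = List.replicate (k * n₁) ()} ∩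
        {w : List Unit | ∃ k : ℕ, w = List.replicate (k * n₂) ()}) = n₁ * n₂ := by
  simpa only [wordStar_wordPow_singleton, hcop.lcm_eq_mul, List.length_singleton, mul_one]
    using tc_inter_unary_witness_general [()] n₁ n₂
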